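/- arXiv:2305.05376 — 2 statements merged into one kernel-verified Lean document; each statement's English description precedes it below -/
import Mathlib

section
/- Let f : (X, 𝒯) → (Y, 𝒰) be a function between fuzzy topological spaces. Then f is somewhat fuzzy continuous if and only if f is somewhat fuzzy semicontinuous. -/
open unitInterval

/-- `Fact` instance making the unit interval `I = [0,1]` a complete lattice. -/
instance : Fact ((0:ℝ) ≤ 1) := ⟨zero_le_one⟩

namespace SomewhatFuzzy

variable {X Y : Type*}

/-- A fuzzy topology on `X` is a collection `T` of fuzzy sets (functions `X → [0,1]`,
ordered pointwise) containing the constant functions `0` and `1`, closed under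
pointwise minimum of two members, and closed under pointwise supremum of any
subfamily. -/
def IsFuzzyTopology (T : Set (X → I)) : Prop :=
  (fun _ => (0 : I)) ∈ T ∧ (fun _ => (1 : I)) ∈ T ∧
    (∀ μ ν, μ ∈ T → ν ∈ T → (fun x => μ x ⊓ ν x) ∈ T) ∧
    (∀ S : Set (X → I), S ⊆ T → (fun x => ⨆ μ ∈ S, μ x) ∈ T)

/-- The fuzzy interior of `l`: the pointwise supremum of all fuzzy open sets `≤ l`. -/
noncomputable def fInterior (T : Set (X → I)) (l : X → I) : X → I :=
  fun x => ⨆ μ ∈ {μ : X → I | μ ∈ T ∧ μ ≤ l}, μ x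

/-- A fuzzy set `μ` is fuzzy closed if `1 - μ` is fuzzy open. -/
def IsFuzzyClosed (T : Set (X → I)) (μ : X → I) : Prop :=
  (fun x => unitInterval.symm (μ x)) ∈ T

/-- The fuzzy closure of `l`: the pointwise infimum of all fuzzy closed sets `≥ l`. -/
noncomputable def fClosure (T : Set (X → I)) (l : X → I) : X → I :=
  fun x => ⨅ μ ∈ {μ : X → I | IsFuzzyClosed T μ ∧ l ≤ μ}, μ x

/-- A fuzzy set `l` is fuzzy semiopen if `l ≤ Cl(Int(l))`. -/
def IsFuzzySemiopen (T : Set (X → I)) (l : X → I) : Prop :=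
  l ≤ fClosure T (fInterior T l)

/-- The fuzzy semi-interior of `l`: the pointwise supremum of all fuzzy semiopen
sets `≤ l`. -/
noncomputable def fSemiInterior (T : Set (X → I)) (l : X → I) : X → I :=
  fun x => ⨆ μ ∈ {μ : X → I | IsFuzzySemiopen T μ ∧ μ ≤ l}, μ x

/-- A fuzzy set `μ` is fuzzy semiclosed if `1 - μ` is fuzzy semiopen. -/
def IsFuzzySemiclosed (T : Set (X → I)) (μ : X → I) : Prop :=
  IsFuzzySemiopen T (fun x => unitInterval.symm (μ x))

/-- The fuzzy semi-closure of `l`: the pointwise infimum of all fuzzy semiclosed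
sets `≥ l`. -/
noncomputable def fSemiClosure (T : Set (X → I)) (l : X → I) : X → I :=
  fun x => ⨅ μ ∈ {μ : X → I | IsFuzzySemiclosed T μ ∧ l ≤ μ}, μ x

/-- A fuzzy set `l` is somewhat fuzzy open if `l = 0` or `Int(l) ≠ 0`. -/
def SomewhatFuzzyOpen (T : Set (X → I)) (l : X → I) : Prop :=
  l = (fun _ => (0 : I)) ∨ fInterior T l ≠ (fun _ => (0 : I))

/-- A fuzzy set `l` is somewhat fuzzy semiopen if `l = 0` or `Int_s(l) ≠ 0`. -/
def SomewhatFuzzySemiopen (T : Set (X → I)) (l : X → I) : Prop :=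
  l = (fun _ => (0 : I)) ∨ fSemiInterior T l ≠ (fun _ => (0 : I))

/-- Preimage of a fuzzy set under a function: `f⁻¹(β) = β ∘ f`. -/
def fPreimage (f : X → Y) (b : Y → I) : X → I := fun x => b (f x)

/-- Image of a fuzzy set under a function:
`f(α)(y) = sup {α x : f x = y}` (supremum over the empty set being `0`). -/
noncomputable def fImage (f : X → Y) (a : X → I) : Y → I :=
  fun y => ⨆ x ∈ {x : X | f x = y}, a x

/-- `f` is fuzzy continuous if the preimage of every fuzzy open set is fuzzy open. -/
def FuzzyContinuous (T : Set (X → I)) (U : Set (Y → I)) (f : X → Y) : Prop :=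
  ∀ b ∈ U, fPreimage f b ∈ T

/-- `f` is fuzzy semicontinuous if the preimage of every fuzzy open set is fuzzy
semiopen. -/
def FuzzySemicontinuous (T : Set (X → I)) (U : Set (Y → I)) (f : X → Y) : Prop :=
  ∀ b ∈ U, IsFuzzySemiopen T (fPreimage f b)

/-- `f` is somewhat fuzzy continuous if the preimage of every fuzzy open set is
somewhat fuzzy open. -/
def SomewhatFuzzyContinuous (T : Set (X → I)) (U : Set (Y → I)) (f : X → Y) : Prop :=
  ∀ b ∈ U, SomewhatFuzzyOpen T (fPreimage f b)

/-- `f` is somewhat fuzzy semicontinuous if the preimage of every fuzzy open set is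
somewhat fuzzy semiopen. -/
def SomewhatFuzzySemicontinuous (T : Set (X → I)) (U : Set (Y → I)) (f : X → Y) : Prop :=
  ∀ b ∈ U, SomewhatFuzzySemiopen T (fPreimage f b)

/-- `f` is a fuzzy open function if the image of every fuzzy open set is fuzzy open. -/
def FuzzyOpenMap (T : Set (X → I)) (U : Set (Y → I)) (f : X → Y) : Prop :=
  ∀ a ∈ T, fImage f a ∈ U

/-- `f` is a fuzzy semiopen function if the image of every fuzzy open set is fuzzy
semiopen. -/
def FuzzySemiopenMap (T : Set (X → I)) (U : Set (Y → I)) (f : X → Y) : Prop :=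
  ∀ a ∈ T, IsFuzzySemiopen U (fImage f a)

/-- `f` is a somewhat fuzzy open function if the image of every fuzzy open set is
somewhat fuzzy open. -/
def SomewhatFuzzyOpenMap (T : Set (X → I)) (U : Set (Y → I)) (f : X → Y) : Prop :=
  ∀ a ∈ T, SomewhatFuzzyOpen U (fImage f a)

/-- `f` is a somewhat fuzzy semiopen function if the image of every fuzzy open set is
somewhat fuzzy semiopen. -/
def SomewhatFuzzySemiopenMap (T : Set (X → I)) (U : Set (Y → I)) (f : X → Y) : Prop :=
  ∀ a ∈ T, SomewhatFuzzySemiopen U (fImage f a)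

/-! For every fuzzy set `l` one has `Int l ≤ Int_s l ≤ Cl (Int l)`. As `0` is fuzzy closed,
`Cl 0 = 0`, so `Int l` and `Int_s l` vanish together. -/

section

variable {T : Set (X → I)} {l m : X → I}

theorem isLUB_fInterior (T : Set (X → I)) (l : X → I) :
    IsLUB {μ | μ ∈ T ∧ μ ≤ l} (fInterior T l) :=
  isLUB_pi.2 fun _ => isLUB_biSup

theorem isGLB_fClosure (T : Set (X → I)) (l : X → I) :
    IsGLB {μ | IsFuzzyClosed T μ ∧ l ≤ μ} (fClosure T l) :=
  isGLB_pi.2 fun _ => isGLB_biInf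

theorem isLUB_fSemiInterior (T : Set (X → I)) (l : X → I) :
    IsLUB {μ | IsFuzzySemiopen T μ ∧ μ ≤ l} (fSemiInterior T l) :=
  isLUB_pi.2 fun _ => isLUB_biSup

theorem fInterior_mono (h : l ≤ m) : fInterior T l ≤ fInterior T m :=
  (isLUB_fInterior T l).mono (isLUB_fInterior T m) fun _ hμ => ⟨hμ.1, hμ.2.trans h⟩

theorem le_fClosure (T : Set (X → I)) (l : X → I) : l ≤ fClosure T l :=
  (isGLB_fClosure T l).2 fun _ hμ => hμ.2

theorem fClosure_mono (h : l ≤ m) : fClosure T l ≤ fClosure T m :=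
  (isGLB_fClosure T m).mono (isGLB_fClosure T l) fun _ hμ => ⟨hμ.1, h.trans hμ.2⟩

theorem IsFuzzyClosed.fClosure_eq (h : IsFuzzyClosed T l) : fClosure T l = l :=
  le_antisymm ((isGLB_fClosure T l).1 ⟨h, le_rfl⟩) (le_fClosure T l)

theorem isFuzzyClosed_zero (h : (fun _ => (1 : I)) ∈ T) : IsFuzzyClosed T fun _ => 0 := by
  simpa only [IsFuzzyClosed, unitInterval.symm_zero] using h

theorem isFuzzySemiopen_of_mem (h : l ∈ T) : IsFuzzySemiopen T l :=
  calc
    l ≤ fInterior T l := (isLUB_fInterior T l).1 ⟨h, le_rfl⟩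
    _ ≤ fClosure T (fInterior T l) := le_fClosure T _

theorem fInterior_le_fSemiInterior (T : Set (X → I)) (l : X → I) :
    fInterior T l ≤ fSemiInterior T l :=
  (isLUB_fInterior T l).mono (isLUB_fSemiInterior T l)
    fun _ hμ => ⟨isFuzzySemiopen_of_mem hμ.1, hμ.2⟩

theorem fSemiInterior_le_fClosure_fInterior (T : Set (X → I)) (l : X → I) :
    fSemiInterior T l ≤ fClosure T (fInterior T l) :=
  (isLUB_fSemiInterior T l).2 fun _ hμ => hμ.1.trans (fClosure_mono (fInterior_mono hμ.2))

theorem fInterior_eq_zero_iff_fSemiInterior_eq_zero (h : (fun _ => (1 : I)) ∈ T) :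
    fInterior T l = (fun _ => 0) ↔ fSemiInterior T l = (fun _ => 0) := by
  refine ⟨fun hzero => ?_, fun hzero => ?_⟩
  · refine le_antisymm ?_ fun _ => unitInterval.nonneg'
    calc
      fSemiInterior T l ≤ fClosure T (fInterior T l) := fSemiInterior_le_fClosure_fInterior T l
      _ = fun _ => 0 := by rw [hzero, (isFuzzyClosed_zero h).fClosure_eq]
  · exact le_antisymm (hzero ▸ fInterior_le_fSemiInterior T l) fun _ => unitInterval.nonneg'

theorem somewhatFuzzyOpen_iff_somewhatFuzzySemiopen (h : (fun _ => (1 : I)) ∈ T) :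
    SomewhatFuzzyOpen T l ↔ SomewhatFuzzySemiopen T l :=
  or_congr_right (fInterior_eq_zero_iff_fSemiInterior_eq_zero h).not

theorem somewhatFuzzyContinuous_iff_somewhatFuzzySemicontinuous_general
    (h : (fun _ => (1 : I)) ∈ T) (U : Set (Y → I)) (f : X → Y) :
    SomewhatFuzzyContinuous T U f ↔ SomewhatFuzzySemicontinuous T U f :=
  forall₂_congr fun _ _ => somewhatFuzzyOpen_iff_somewhatFuzzySemiopen h

end

/-- Theorem 2.5(1): `f` is somewhat fuzzy continuous iff it is somewhat fuzzy
semicontinuous. -/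
theorem somewhatFuzzyContinuous_iff_somewhatFuzzySemicontinuous
    {X Y : Type*} (T : Set (X → I)) (U : Set (Y → I))
    (hT : IsFuzzyTopology T) (hU : IsFuzzyTopology U) (f : X → Y) :
    SomewhatFuzzyContinuous T U f ↔ SomewhatFuzzySemicontinuous T U f :=
  somewhatFuzzyContinuous_iff_somewhatFuzzySemicontinuous_general hT.2.1 U f

end SomewhatFuzzy
end

section
/- Let f : (X, 𝒯) → (Y, 𝒰) be a function between fuzzy topological spaces. If f is fuzzy semicontinuous, then f is somewhat fuzzy continuous. -/
open unitInterval

namespace SomewhatFuzzy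

variable {X Y : Type*}

theorem isFuzzyClosed_zero_iff {T : Set (X → I)} :
    IsFuzzyClosed T (fun _ => 0) ↔ (fun _ => 1) ∈ T := by
  simp only [IsFuzzyClosed, unitInterval.symm_zero]

theorem fClosure_le {T : Set (X → I)} {l μ : X → I} (hμ : IsFuzzyClosed T μ) (hl : l ≤ μ) :
    fClosure T l ≤ μ :=
  fun _ => iInf₂_le μ ⟨hμ, hl⟩

theorem fClosure_zero {T : Set (X → I)} (hT : (fun _ => 1) ∈ T) :
    fClosure T (fun _ => 0) = fun _ => 0 :=
  le_antisymm (fClosure_le (isFuzzyClosed_zero_iff.mpr hT) le_rfl)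
    fun _ => unitInterval.nonneg'

theorem IsFuzzySemiopen.eq_zero_of_fInterior_eq_zero {T : Set (X → I)} {l : X → I}
    (hT : (fun _ => 1) ∈ T) (hl : IsFuzzySemiopen T l) (hint : fInterior T l = fun _ => 0) :
    l = fun _ => 0 := by
  refine le_antisymm ?_ fun _ => unitInterval.nonneg'
  calc
    l ≤ fClosure T (fInterior T l) := hl
    _ = fClosure T (fun _ => 0) := by rw [hint]
    _ = fun _ => 0 := fClosure_zero hT

theorem IsFuzzySemiopen.somewhatFuzzyOpen {T : Set (X → I)} {l : X → I}
    (hT : (fun _ => 1) ∈ T) (hl : IsFuzzySemiopen T l) : SomewhatFuzzyOpen T l :=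
  or_iff_not_imp_right.mpr fun hint =>
    hl.eq_zero_of_fInterior_eq_zero hT (not_ne_iff.mp hint)

theorem somewhatFuzzyContinuous_of_fuzzySemicontinuous_general
    {T : Set (X → I)} {U : Set (Y → I)} (hT : (fun _ => 1) ∈ T) {f : X → Y}
    (hf : FuzzySemicontinuous T U f) : SomewhatFuzzyContinuous T U f :=
  fun b hb => (hf b hb).somewhatFuzzyOpen hT

/-- Every fuzzy semicontinuous function is somewhat fuzzy continuous. -/
theorem somewhatFuzzyContinuous_of_fuzzySemicontinuous
    {X Y : Type*} (T : Set (X → I)) (U : Set (Y → I))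
    (hT : IsFuzzyTopology T) (hU : IsFuzzyTopology U) (f : X → Y)
    (hf : FuzzySemicontinuous T U f) :
    SomewhatFuzzyContinuous T U f := by
  exact somewhatFuzzyContinuous_of_fuzzySemicontinuous_general hT.2.1 hf

end SomewhatFuzzy
end
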